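/- Let G be a doubly regular tournament on v = 4m−1 vertices (m ≥ 1). Define the adjacency polynomial C(x,y) = x(x+1)(4m−1−y) − 2xy(2m − (y+1)/2) + y(y−1)(m − (y+1)/3). If G contains a transitive subtournament of size s, then C(b,s) ≥ 0 for every integer b. -/

import Mathlib

open Matrix Finset

/-- A digraph on `v` vertices, given by its adjacency matrix: entries in `{0,1}`, zero diagonal. -/
def IsDigraph {v : ℕ} (A : Matrix (Fin v) (Fin v) ℂ) : Prop :=
  (∀ x y, A x y = 0 ∨ A x y = 1) ∧ ∀ x, A x x = 0

/-- A tournament: a digraph with `A + Aᵀ = J - I`. -/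
def IsTournament {v : ℕ} (A : Matrix (Fin v) (Fin v) ℂ) : Prop :=
  IsDigraph A ∧ A + Aᵀ = Matrix.of (fun _ _ => 1) - 1

/-- A doubly regular tournament: every vertex dominates exactly `(v-1)/2` vertices and every
pair of distinct vertices jointly dominates exactly `(v-3)/4` vertices (so `v ≡ 3 (mod 4)`). -/
def IsDRT {v : ℕ} (A : Matrix (Fin v) (Fin v) ℂ) : Prop :=
  IsTournament A ∧ v % 4 = 3 ∧
  (∀ x, (univ.filter fun y => A x y = 1).card = (v - 1) / 2) ∧
  (∀ x y, x ≠ y → (univ.filter fun z => A x z = 1 ∧ A y z = 1).card = (v - 3) / 4)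

/-- `T` is a transitive subtournament of the digraph with adjacency matrix `A`. -/
def IsTransSubtournament {v : ℕ} (A : Matrix (Fin v) (Fin v) ℂ) (T : Finset (Fin v)) : Prop :=
  (∀ x ∈ T, ∀ y ∈ T, x ≠ y → Xor' (A x y = 1) (A y x = 1)) ∧
  (∀ x ∈ T, ∀ y ∈ T, ∀ z ∈ T, A x y = 1 → A y z = 1 → A x z = 1)

/-- The adjacency polynomial of a doubly regular tournament on `4m-1` vertices:
`C(x,y) = x(x+1)(4m-1-y) - 2xy(2m-(y+1)/2) + y(y-1)(m-(y+1)/3)`. -/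
noncomputable def adjPoly (m : ℕ) (x y : ℝ) : ℝ :=
  x * (x + 1) * (4 * m - 1 - y) - 2 * x * y * (2 * m - (y + 1) / 2) +
    y * (y - 1) * (m - (y + 1) / 3)

/-
For a vertex `z` let `d z` be the number of vertices of `T` dominating `z`. For an integer `b` the
product `(b - d z) * (b - d z + 1)` of two consecutive integers is nonnegative, hence so is its sum
over the vertices outside `T`, and that sum is `C(b, s)`: over all vertices the sum is found by
counting the pairs `(x, z)` and the triples `(x, y, z)` in which distinct `x, y ∈ T` dominate `z`,
while over `T` it is `∑ i < s, (b - i) * (b - i + 1)`, because on a transitive tournament `d` takes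
each of the values `0, …, s - 1` exactly once.
-/

lemma int_mul_add_one_nonneg (n : ℤ) : 0 ≤ n * (n + 1) := by
  rcases le_or_gt 0 n with hn | hn
  · positivity
  · exact mul_nonneg_of_nonpos_of_nonpos hn.le hn

lemma sum_range_sub_mul_sub_add_one {K : Type*} [Field K] [CharZero K] (b : K) (s : ℕ) :
    ∑ i ∈ range s, (b - i) * (b - i + 1) =
      s * (b * (b + 1)) - b * (s * (s - 1)) + s * (s - 1) * (s - 2) / 3 := by
  induction s with
  | zero => simp
  | succ n ih =>
    rw [sum_range_succ, ih]
    push_cast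
    ring

lemma cast_card_offDiag {K V : Type*} [Ring K] (S : Finset V) :
    (#S.offDiag : K) = #S * (#S - 1) := by
  rw [offDiag_card, Nat.cast_sub (Nat.le_mul_self _)]
  push_cast
  rw [mul_sub_one]

/-- The relation `R` restricts to a strict total order on `T`: in the digraph with arc relation `R`,
the vertex set `T` spans a transitive tournament. -/
structure IsStrictTotalOn {V : Type*} (R : V → V → Prop) (T : Finset V) : Prop where
  irrefl : ∀ x ∈ T, ¬ R x x
  total : ∀ x ∈ T, ∀ y ∈ T, x ≠ y → R x y ∨ R y x
  trans : ∀ x ∈ T, ∀ y ∈ T, ∀ z ∈ T, R x y → R y z → R x z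

/-- The adjacency polynomial of a digraph on `v` vertices in which every vertex has out-degree `k`
and any two distinct vertices have `l` common out-neighbours. -/
noncomputable def digraphAdjPoly (v k l : ℕ) (x y : ℝ) : ℝ :=
  x * (x + 1) * (v - y) - 2 * x * y * (k - (y - 1) / 2) + y * (y - 1) * (l - (y - 2) / 3)

section Relation

variable {V : Type*} {R : V → V → Prop} [DecidableRel R] {T : Finset V}

namespace IsStrictTotalOn

lemma card_bipartiteBelow_lt_of_rel (h : IsStrictTotalOn R T) {x z : V} (hx : x ∈ T) (hz : z ∈ T)
    (hxz : R x z) : #(T.bipartiteBelow R x) < #(T.bipartiteBelow R z) := by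
  have hsub : T.bipartiteBelow R x ⊆ T.bipartiteBelow R z := fun y hy => by
    rw [mem_bipartiteBelow] at hy ⊢
    exact ⟨hy.1, h.trans y hy.1 x hx z hz hy.2 hxz⟩
  refine card_lt_card ((ssubset_iff_of_subset hsub).2 ⟨x, ?_, ?_⟩)
  · simp [hx, hxz]
  · simp [h.irrefl x hx]

lemma injOn_card_bipartiteBelow (h : IsStrictTotalOn R T) :
    Set.InjOn (fun z => #(T.bipartiteBelow R z)) T := by
  intro x hx z hz hcard
  by_contra hne
  rcases h.total x hx z hz hne with hxz | hzx
  · exact (h.card_bipartiteBelow_lt_of_rel hx hz hxz).ne hcard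
  · exact (h.card_bipartiteBelow_lt_of_rel hz hx hzx).ne' hcard

lemma image_card_bipartiteBelow (h : IsStrictTotalOn R T) :
    T.image (fun z => #(T.bipartiteBelow R z)) = range #T := by
  refine eq_of_subset_of_card_le (image_subset_iff.2 fun z hz => mem_range.2 ?_) ?_
  · exact card_lt_card (filter_ssubset.2 ⟨z, hz, h.irrefl z hz⟩)
  · rw [card_range, card_image_of_injOn h.injOn_card_bipartiteBelow]

lemma sum_comp_card_bipartiteBelow {M : Type*} [AddCommMonoid M] (h : IsStrictTotalOn R T)
    (f : ℕ → M) : ∑ z ∈ T, f #(T.bipartiteBelow R z) = ∑ i ∈ range #T, f i := by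
  rw [← h.image_card_bipartiteBelow, sum_image h.injOn_card_bipartiteBelow]

end IsStrictTotalOn

variable [Fintype V] {k l : ℕ}

lemma sum_card_bipartiteBelow (hk : ∀ x ∈ T, #{z | R x z} = k) :
    ∑ z, #(T.bipartiteBelow R z) = #T * k := by
  rw [← sum_card_bipartiteAbove_eq_sum_card_bipartiteBelow R]
  exact sum_const_nat hk

lemma sum_card_offDiag_bipartiteBelow
    (hl : ∀ x ∈ T, ∀ y ∈ T, x ≠ y → #{z | R x z ∧ R y z} = l) :
    ∑ z, #(T.bipartiteBelow R z).offDiag = #T.offDiag * l := by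
  have hpairs (z : V) : (T.bipartiteBelow R z).offDiag =
      T.offDiag.bipartiteBelow (fun p z => R p.1 z ∧ R p.2 z) z := by
    ext p
    simp only [mem_offDiag, mem_bipartiteBelow]
    tauto
  simp_rw [hpairs]
  rw [← sum_card_bipartiteAbove_eq_sum_card_bipartiteBelow]
  refine sum_const_nat fun p hp => ?_
  obtain ⟨hx, hy, hxy⟩ := mem_offDiag.1 hp
  exact hl p.1 hx p.2 hy hxy

lemma sum_sub_card_mul_sub_card_add_one {K : Type*} [CommRing K]
    (hk : ∀ x ∈ T, #{z | R x z} = k)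
    (hl : ∀ x ∈ T, ∀ y ∈ T, x ≠ y → #{z | R x z ∧ R y z} = l) (b : K) :
    ∑ z, (b - #(T.bipartiteBelow R z)) * (b - #(T.bipartiteBelow R z) + 1) =
      Fintype.card V * (b * (b + 1)) - 2 * b * (#T * k) + #T * (#T - 1) * l := by
  have hexpand (z : V) : (b - #(T.bipartiteBelow R z)) * (b - #(T.bipartiteBelow R z) + 1) =
      b * (b + 1) - 2 * b * #(T.bipartiteBelow R z) + #(T.bipartiteBelow R z).offDiag := by
    rw [cast_card_offDiag]
    ring
  simp_rw [hexpand, sum_add_distrib, sum_sub_distrib, ← mul_sum, ← Nat.cast_sum]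
  rw [sum_card_bipartiteBelow hk, sum_card_offDiag_bipartiteBelow hl, sum_const, card_univ,
    nsmul_eq_mul, Nat.cast_mul, Nat.cast_mul, cast_card_offDiag]
  ring

theorem adjacency_polynomial_nonneg_general (hT : IsStrictTotalOn R T)
    (hk : ∀ x ∈ T, #{z | R x z} = k)
    (hl : ∀ x ∈ T, ∀ y ∈ T, x ≠ y → #{z | R x z ∧ R y z} = l) (b : ℤ) :
    0 ≤ digraphAdjPoly (Fintype.card V) k l b #T := by
  have hnonneg (z : V) :
      0 ≤ ((b : ℝ) - #(T.bipartiteBelow R z)) * (b - #(T.bipartiteBelow R z) + 1) :=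
    mod_cast int_mul_add_one_nonneg (b - #(T.bipartiteBelow R z))
  have hsum := sum_le_univ_sum_of_nonneg (s := T) hnonneg
  rw [hT.sum_comp_card_bipartiteBelow fun i => ((b : ℝ) - i) * (b - i + 1),
    sum_range_sub_mul_sub_add_one, sum_sub_card_mul_sub_card_add_one hk hl] at hsum
  rw [digraphAdjPoly]
  linarith

end Relation

lemma IsTransSubtournament.isStrictTotalOn {v : ℕ} {A : Matrix (Fin v) (Fin v) ℂ}
    {T : Finset (Fin v)} (hT : IsTransSubtournament A T) (hA : ∀ x, A x x = 0) :
    IsStrictTotalOn (fun x y => A x y = 1) T where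
  irrefl x _ := by simp [hA x]
  total x hx y hy hxy := Xor.or (hT.1 x hx y hy hxy)
  trans := hT.2

lemma adjPoly_eq_digraphAdjPoly {m : ℕ} (hm : 1 ≤ m) (x y : ℝ) :
    adjPoly m x y =
      digraphAdjPoly (4 * m - 1) ((4 * m - 1 - 1) / 2) ((4 * m - 1 - 3) / 4) x y := by
  obtain ⟨n, rfl⟩ := Nat.exists_eq_add_of_le' hm
  have hv : 4 * (n + 1) - 1 = 4 * n + 3 := by omega
  have hk : (4 * (n + 1) - 1 - 1) / 2 = 2 * n + 1 := by omega
  have hl : (4 * (n + 1) - 1 - 3) / 4 = n := by omega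
  rw [adjPoly, digraphAdjPoly, hk, hl, hv]
  push_cast
  ring

/-- If a doubly regular tournament on `v = 4m-1` vertices contains a transitive
subtournament of size `s`, then `C(b, s) ≥ 0` for every integer `b`. -/
theorem adjacency_polynomial_nonneg
    {m s : ℕ} (hm : 1 ≤ m)
    (A : Matrix (Fin (4 * m - 1)) (Fin (4 * m - 1)) ℂ) (hA : IsDRT A)
    (T : Finset (Fin (4 * m - 1))) (hT : IsTransSubtournament A T) (hTcard : T.card = s) :
    ∀ b : ℤ, 0 ≤ adjPoly m (b : ℝ) (s : ℝ) := by
  intro b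
  obtain ⟨⟨⟨-, hloop⟩, -⟩, -, hk, hl⟩ := hA
  let : DecidableRel fun x y => A x y = 1 := fun _ _ => inferInstance
  rw [adjPoly_eq_digraphAdjPoly hm, ← hTcard]
  simpa only [Fintype.card_fin] using adjacency_polynomial_nonneg_general
    (hT.isStrictTotalOn hloop) (fun x _ => hk x) (fun x _ y _ => hl x y) b
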